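/- Let S² be the unit sphere in three-dimensional Euclidean space, fix x₀ ∈ S², and let Φ₀ : S² → Sym2 S² be the continuous map Φ₀(x) = ⟦(x, x₀)⟧. Let Ψ : S² → S² be a continuous map without fixed points (Ψ(p) ≠ p for every p ∈ S²), and let φ₁, φ₂ : S² → S² be continuous maps such that the map x ↦ ⟦(φ₁(x), φ₂(x))⟧ : S² → Sym2 S² is homotopic to Φ₀. Then there exists x ∈ S² with φ₂(x) = Ψ(φ₁(x)). -/

import Mathlib

/-- The unit sphere `S²` in three-dimensional Euclidean space. -/
abbrev S2 : Type := Metric.sphere (0 : EuclideanSpace ℝ (Fin 3)) 1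

/-!
`Sym2 S²` is the complex projective plane of binary quadratic forms, hence carries a tautological
line bundle. If `φ₂` never meets `Ψ ∘ φ₁`, then `φ₁` and `φ₂` both avoid `Ψ ∘ φ₁`, so they are
homotopic, and `Φ₀` is homotopic to `x ↦ s(φ₁ x, φ₁ x)`. The pullback of the tautological bundle
along `Φ₀` is the tautological bundle of `S²`, while its pullback along any map into the diagonal
is the square of a line bundle. The tautological bundle of `S²` has no square root: restricted to
the disc whose boundary is a fibre of the Hopf fibration, such a root would give a continuous square
root of the identity map of the circle.
-/

open Complex Matrix Topology
open scoped ComplexConjugate ComplexOrder Matrix.Norms.Frobenius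

section Sections

variable {𝕜 V K : Type*} [NontriviallyNormedField 𝕜] [NormedAddCommGroup V] [NormedSpace 𝕜 V]
  [TopologicalSpace K]

/-- The vector bundle over `K` whose fibre over `w` is the range of the idempotent `P w` has a
continuous nowhere vanishing section lying in `S`. The set `S` records side conditions such as
equivariance. -/
def HasNonvanishingSection (P : K → V →L[𝕜] V) (S : Set (K → V)) : Prop :=
  ∃ m ∈ S, Continuous m ∧ ∀ w, m w ≠ 0 ∧ P w (m w) = m w

lemma apply_ne_zero_of_dist_lt_one {P Q : V →L[𝕜] V} (h : dist P Q < 1) {v : V} (hv : v ≠ 0)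
    (hPv : P v = v) : Q v ≠ 0 := by
  intro hQv
  have hle : ‖v‖ ≤ ‖P - Q‖ * ‖v‖ := by
    simpa [hPv, hQv] using (P - Q).le_opNorm v
  rw [dist_eq_norm] at h
  exact hle.not_gt (mul_lt_of_lt_one_left (norm_pos_iff.2 hv) h)

lemma HasNonvanishingSection.of_dist_lt_one {P Q : K → V →L[𝕜] V} {S : Set (K → V)}
    (hQ : Continuous Q) (hidem : ∀ w, IsIdempotentElem (Q w))
    (hS : ∀ m ∈ S, (fun w ↦ Q w (m w)) ∈ S) (hdist : ∀ w, dist (P w) (Q w) < 1)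
    (h : HasNonvanishingSection P S) : HasNonvanishingSection Q S := by
  obtain ⟨m, hmS, hm, hmP⟩ := h
  exact ⟨fun w ↦ Q w (m w), hS m hmS, hQ.clm_apply hm, fun w ↦
    ⟨apply_ne_zero_of_dist_lt_one (hdist w) (hmP w).1 (hmP w).2,
      DFunLike.congr_fun (hidem w) (m w)⟩⟩

/-- Nearby members of the family are joined by projecting a section of one to the other. -/
lemma HasNonvanishingSection.of_preconnectedSpace {T : Type*} [TopologicalSpace T]
    [PreconnectedSpace T] [CompactSpace K] {P : T × K → V →L[𝕜] V} (hP : Continuous P)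
    (hidem : ∀ x, IsIdempotentElem (P x)) {S : Set (K → V)}
    (hS : ∀ t, ∀ m ∈ S, (fun w ↦ P (t, w) (m w)) ∈ S) {s : T}
    (h : HasNonvanishingSection (fun w ↦ P (s, w)) S) (t : T) :
    HasNonvanishingSection (fun w ↦ P (t, w)) S := by
  have hslice : ∀ t, Continuous fun w ↦ P (t, w) := fun t ↦ hP.comp (.prodMk_right t)
  refine PreconnectedSpace.induction₂' (fun s t ↦ HasNonvanishingSection (fun w ↦ P (s, w)) S →
    HasNonvanishingSection (fun w ↦ P (t, w)) S) (fun s ↦ ?_) ⟨fun _ _ _ h h' ↦ h' ∘ h⟩ s t h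
  let F : C(T × K, V →L[𝕜] V) := ⟨P, hP⟩
  have hnear : ∀ᶠ t in 𝓝 s, dist (F.curry t) (F.curry s) < 1 :=
    Metric.tendsto_nhds.1 (F.curry.continuous.tendsto s) 1 one_pos
  filter_upwards [hnear] with t ht
  have hdist : ∀ w, dist (P (t, w)) (P (s, w)) < 1 := (ContinuousMap.dist_lt_iff one_pos).1 ht
  refine ⟨fun h ↦ ?_, fun h ↦ ?_⟩
  · exact h.of_dist_lt_one (hslice t) (fun w ↦ hidem (t, w)) (hS t) fun w ↦ by
      rw [dist_comm]; exact hdist w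
  · exact h.of_dist_lt_one (hslice s) (fun w ↦ hidem (s, w)) (hS s) hdist

lemma HasNonvanishingSection.of_homotopic {X Y : Type*} [TopologicalSpace X] [TopologicalSpace Y]
    [CompactSpace K] {P : X → V →L[𝕜] V} (hP : Continuous P) (hidem : ∀ x, IsIdempotentElem (P x))
    (q : C(K, Y)) {S : Set (K → V)}
    (hS : ∀ Q : Y → V →L[𝕜] V, ∀ m ∈ S, (fun w ↦ Q (q w) (m w)) ∈ S) {f g : C(Y, X)}
    (hfg : f.Homotopic g) (h : HasNonvanishingSection (fun w ↦ P (f (q w))) S) :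
    HasNonvanishingSection (fun w ↦ P (g (q w))) S := by
  obtain ⟨H⟩ := hfg
  have hcont : Continuous fun x : unitInterval × K ↦ P (H (x.1, q x.2)) := by fun_prop
  simpa using HasNonvanishingSection.of_preconnectedSpace hcont (fun _ ↦ hidem _)
    (fun t ↦ hS fun y ↦ P (H (t, y))) (s := 0) (by simpa using h) 1

lemma hasNonvanishingSection_of_contractibleSpace [CompactSpace K] [ContractibleSpace K]
    {P : K → V →L[𝕜] V} (hP : Continuous P) (hidem : ∀ w, IsIdempotentElem (P w))
    (hne : ∀ w, P w ≠ 0) : HasNonvanishingSection P Set.univ := by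
  obtain ⟨w₀, hw₀⟩ := id_nullhomotopic K
  obtain ⟨v, hv⟩ := DFunLike.ne_iff.1 (hne w₀)
  exact .of_homotopic hP hidem (.id K) (fun _ _ _ ↦ Set.mem_univ _) hw₀.symm
    ⟨fun _ ↦ P w₀ v, trivial, continuous_const, fun _ ↦ ⟨hv, DFunLike.congr_fun (hidem w₀) v⟩⟩

end Sections

section SquareRoots

lemma exists_continuousMap_pow_eq {K : Type*} [TopologicalSpace K] [SimplyConnectedSpace K]
    [LocallyPathConnectedSpace K] (f : C(K, ℂ)) (hf : ∀ w, f w ≠ 0) {n : ℕ} (hn : n ≠ 0) :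
    ∃ r : C(K, ℂ), ∀ w, r w ^ n = f w := by
  obtain ⟨w₀⟩ : Nonempty K := inferInstance
  obtain ⟨z₀, hz₀⟩ := IsAlgClosed.exists_pow_nat_eq (f w₀) hn.pos
  obtain ⟨r, ⟨-, hr⟩, -⟩ := (isCoveringMapOn_npow (𝕜 := ℂ) n
    (Nat.cast_ne_zero.2 hn)).existsUnique_continuousMap_lifts f hz₀ hf
  exact ⟨r, congrFun hr⟩

lemma not_exists_continuous_sqrt_circle :
    ¬ ∃ r : Circle → ℂ, Continuous r ∧ ∀ z, r z ^ 2 = z := by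
  rintro ⟨r, hr, hsq⟩
  have hne : ∀ z, r z ≠ 0 := fun z hz ↦ z.coe_ne_zero (by rw [← hsq, hz, zero_pow two_ne_zero])
  let u : Circle := Circle.exp Real.pi
  have hu : (u : ℂ) = -1 := by simp [u]
  have huu : u * u = 1 := Circle.ext (by simp [hu])
  have key : ∃ ε : ℂ, ε ^ 2 = -1 ∧ ∀ z, r (u * z) = ε * r z := by
    rcases isPreconnected_univ.eq_or_eq_neg_of_sq_eq (f := fun z ↦ r (u * z))
      (g := fun z ↦ I * r z) (S := Set.univ) (by fun_prop) (by fun_prop)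
      (fun z _ ↦ by simp [mul_pow, hsq, hu]) (fun {z} _ ↦ mul_ne_zero I_ne_zero (hne z)) with h | h
    · exact ⟨I, I_sq, fun z ↦ h trivial⟩
    · exact ⟨-I, by simp, fun z ↦ by simpa using h (Set.mem_univ z)⟩
  obtain ⟨ε, hε, hmul⟩ := key
  have hneg : r 1 = ε ^ 2 * r 1 := by
    calc r 1 = r (u * (u * 1)) := by rw [mul_one, huu]
      _ = ε ^ 2 * r 1 := by rw [hmul, hmul]; ring
  rw [hε, neg_one_mul, self_eq_neg] at hneg
  exact hne 1 hneg

end SquareRoots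

section SphereHomotopy

variable {X E : Type*} [TopologicalSpace X] [NormedAddCommGroup E] [NormedSpace ℝ E]

lemma segment_combination_ne_zero {x y : Metric.sphere (0 : E) 1} (h : x ≠ -y) (t : unitInterval) :
    (1 - t : ℝ) • (x : E) + (t : ℝ) • (y : E) ≠ 0 := by
  intro h0
  have heq : (1 - t : ℝ) • (x : E) = -((t : ℝ) • (y : E)) := eq_neg_of_add_eq_zero_left h0
  have hnorm : (1 - t : ℝ) = t := by
    simpa [norm_smul, abs_of_nonneg t.2.1, abs_of_nonneg (sub_nonneg.2 t.2.2)] using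
      congrArg norm heq
  have ht : (t : ℝ) ≠ 0 := fun h ↦ by norm_num [h] at hnorm
  rw [hnorm, ← smul_neg] at heq
  exact h (Subtype.ext (smul_right_injective E ht heq))

lemma homotopic_of_forall_ne_neg {f g : C(X, Metric.sphere (0 : E) 1)}
    (h : ∀ x, f x ≠ -g x) : f.Homotopic g := by
  let v : unitInterval × X → E := fun x ↦ (1 - x.1 : ℝ) • (f x.2 : E) + (x.1 : ℝ) • (g x.2 : E)
  have hv : Continuous v := by fun_prop
  have hv0 : ∀ x, v x ≠ 0 := fun x ↦ segment_combination_ne_zero (h x.2) x.1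
  have hsphere : ∀ x, ‖v x‖⁻¹ • v x ∈ Metric.sphere (0 : E) 1 := fun x ↦ by
    simp [norm_smul, hv0 x]
  exact ⟨{
    toFun x := ⟨‖v x‖⁻¹ • v x, hsphere x⟩
    continuous_toFun := by
      have := fun x ↦ norm_ne_zero_iff.2 (hv0 x)
      fun_prop (disch := assumption)
    map_zero_left x := by ext; simp [v]
    map_one_left x := by ext; simp [v] }⟩

lemma homotopic_of_forall_ne {f g k : C(X, Metric.sphere (0 : E) 1)}
    (hf : ∀ x, f x ≠ k x) (hg : ∀ x, g x ≠ k x) : f.Homotopic g := by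
  let negk : C(X, Metric.sphere (0 : E) 1) := ⟨fun x ↦ -k x, by fun_prop⟩
  have hfk : f.Homotopic negk := homotopic_of_forall_ne_neg fun x ↦ by simpa [negk] using hf x
  have hgk : g.Homotopic negk := homotopic_of_forall_ne_neg fun x ↦ by simpa [negk] using hg x
  exact hfk.trans hgk.symm

end SphereHomotopy

section SymmetricTensors

variable {n : Type*} [Fintype n]

/-- The symmetric product of two vectors, as a symmetric matrix (a quadratic tensor). -/
def symProd (a b : n → ℂ) : Matrix n n ℂ := vecMulVec a b + vecMulVec b a

/-- The symmetrization `M ↦ M + Mᵀ`, that is, twice the projection onto symmetric tensors. -/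
noncomputable def symmetrize : Matrix n n ℂ →L[ℂ] Matrix n n ℂ :=
  .id ℂ _ + (transposeLinearEquiv n n ℂ ℂ).toLinearMap.toContinuousLinearMap

lemma symmetrize_apply (M : Matrix n n ℂ) : symmetrize M = M + Mᵀ := rfl

lemma star_dotProduct_mul_star_dotProduct (a b : n → ℂ) :
    star a ⬝ᵥ b * star b ⬝ᵥ a = normSq (star a ⬝ᵥ b) := by
  rw [← mul_conj, star_dotProduct b a, starRingEnd_apply]

lemma trace_vecMulVec_star_mul (a b : n → ℂ) :
    trace (vecMulVec a (star a) * vecMulVec b (star b)) = normSq (star a ⬝ᵥ b) := by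
  rw [vecMulVec_mul_vecMulVec, trace_vecMulVec, dotProduct_smul, smul_eq_mul,
    dotProduct_comm a, star_dotProduct_mul_star_dotProduct]

lemma one_add_trace_vecMulVec_star_mul_ne_zero (a b : n → ℂ) :
    1 + trace (vecMulVec a (star a) * vecMulVec b (star b)) ≠ 0 := by
  rw [trace_vecMulVec_star_mul]
  exact_mod_cast (add_pos_of_pos_of_nonneg one_pos (normSq_nonneg (star a ⬝ᵥ b))).ne'

lemma vecMulVec_star_mul_mul (a b : n → ℂ) (N : Matrix n n ℂ) :
    vecMulVec a (star a) * N * (vecMulVec b (star b))ᵀ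
      = (star a ⬝ᵥ N *ᵥ star b) • vecMulVec a b := by
  rw [transpose_vecMulVec, vecMulVec_mul, vecMulVec_mul_vecMulVec, vecMulVec_smul,
    dotProduct_mulVec]

variable {a b : n → ℂ}

lemma star_dotProduct_symProd_mulVec (ha : star a ⬝ᵥ a = 1) (hb : star b ⬝ᵥ b = 1) :
    star a ⬝ᵥ symProd a b *ᵥ star b = 1 + normSq (star a ⬝ᵥ b) := by
  simp [← star_dotProduct_mul_star_dotProduct, symProd, add_mulVec, vecMulVec_mulVec,
    dotProduct_add, ha, dotProduct_comm _ (star b), hb, mul_comm]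

lemma symProd_ne_zero (ha : star a ⬝ᵥ a = 1) (hb : star b ⬝ᵥ b = 1) : symProd a b ≠ 0 := by
  intro h
  have := star_dotProduct_symProd_mulVec ha hb
  rw [h, zero_mulVec, dotProduct_zero, ← trace_vecMulVec_star_mul] at this
  exact one_add_trace_vecMulVec_star_mul_ne_zero a b this.symm

variable [DecidableEq n]

/-- For rank-one orthogonal projections `A` and `B`, the projection onto the line spanned by the
symmetric product of a vector in the range of `A` and one in the range of `B`: tensors are
symmetrized, compressed by `A ⊗ B`, and symmetrized again. The scalar makes the result idempotent,
and is a junk value when `trace (A * B) = -1`. -/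
noncomputable def symProj (A B : Matrix n n ℂ) : Matrix n n ℂ →L[ℂ] Matrix n n ℂ :=
  (2 * (1 + trace (A * B)))⁻¹ • symmetrize ∘L .mulLeftRight ℂ _ A Bᵀ ∘L symmetrize

lemma symProj_apply (A B M : Matrix n n ℂ) :
    symProj A B M = (2 * (1 + trace (A * B)))⁻¹ • symmetrize (A * symmetrize M * Bᵀ) := rfl

lemma symProj_comm (A B : Matrix n n ℂ) : symProj A B = symProj B A := by
  ext1 M
  simp only [symProj_apply, symmetrize_apply, transpose_mul, transpose_transpose, transpose_add,
    trace_mul_comm A B, Matrix.mul_assoc]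
  rw [add_comm Mᵀ, add_comm (A * _)]

lemma continuous_symProj {X : Type*} [TopologicalSpace X] {A B : X → Matrix n n ℂ}
    (hA : Continuous A) (hB : Continuous B) (h : ∀ x, 1 + trace (A x * B x) ≠ 0) :
    Continuous fun x ↦ symProj (A x) (B x) := by
  have hinv : Continuous fun x ↦ (2 * (1 + trace (A x * B x)))⁻¹ :=
    .inv₀ (by fun_prop) fun x ↦ mul_ne_zero two_ne_zero (h x)
  unfold symProj
  fun_prop

lemma symProj_vecMulVec_apply (a b : n → ℂ) (M : Matrix n n ℂ) :
    symProj (vecMulVec a (star a)) (vecMulVec b (star b)) M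
      = ((2 * (1 + (normSq (star a ⬝ᵥ b) : ℂ)))⁻¹ * (star a ⬝ᵥ (M + Mᵀ) *ᵥ star b)) •
        symProd a b := by
  rw [symProj_apply, vecMulVec_star_mul_mul, map_smul, smul_smul, trace_vecMulVec_star_mul]
  simp only [symmetrize_apply, transpose_vecMulVec, symProd]

lemma symProj_symProd (ha : star a ⬝ᵥ a = 1) (hb : star b ⬝ᵥ b = 1) :
    symProj (vecMulVec a (star a)) (vecMulVec b (star b)) (symProd a b) = symProd a b := by
  have hsymm : symProd a b + (symProd a b)ᵀ = (2 : ℂ) • symProd a b := by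
    simp only [symProd, transpose_add, transpose_vecMulVec, two_smul]
    rw [add_comm (vecMulVec b a)]
  have hne := one_add_trace_vecMulVec_star_mul_ne_zero a b
  rw [trace_vecMulVec_star_mul] at hne
  rw [symProj_vecMulVec_apply, hsymm, smul_mulVec, dotProduct_smul,
    star_dotProduct_symProd_mulVec ha hb, smul_eq_mul,
    inv_mul_cancel₀ (mul_ne_zero two_ne_zero hne), one_smul]

lemma isIdempotentElem_symProj (ha : star a ⬝ᵥ a = 1) (hb : star b ⬝ᵥ b = 1) :
    IsIdempotentElem (symProj (vecMulVec a (star a)) (vecMulVec b (star b))) := by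
  ext1 M
  rw [mul_apply_eq_comp, symProj_vecMulVec_apply a b M, map_smul, symProj_symProd ha hb]

end SymmetricTensors

section Spinors

/-- Unit vectors of `ℂ²`, that is, the three-sphere. -/
abbrev S3 : Type := Metric.sphere (0 : EuclideanSpace ℂ (Fin 2)) 1

/-- The vector of `ℂ²` underlying a point of the three-sphere. -/
def S3.vec (v : S3) : Fin 2 → ℂ := v.1.ofLp

lemma S3.continuous_vec : Continuous S3.vec := by
  unfold S3.vec; fun_prop

lemma S3.star_dotProduct_self (v : S3) : star v.vec ⬝ᵥ v.vec = 1 := by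
  have h : inner ℂ v.1 v.1 = (1 : ℂ) := by
    rw [inner_self_eq_norm_sq_to_K, norm_eq_of_mem_sphere]; simp
  rwa [EuclideanSpace.inner_eq_star_dotProduct, dotProduct_comm] at h

lemma S3.normSq_add_normSq (v : S3) : normSq (v.vec 0) + normSq (v.vec 1) = 1 := by
  have h : (normSq (v.vec 0) + normSq (v.vec 1) : ℂ) = 1 := by
    simpa [dotProduct, Fin.sum_univ_two, ← normSq_eq_conj_mul_self] using v.star_dotProduct_self
  exact_mod_cast h

/-- The point of the three-sphere with coordinates `a` and `b`. -/
noncomputable def S3.mk (a b : ℂ) (h : normSq a + normSq b = 1) : S3 :=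
  ⟨!₂[a, b], by simp [EuclideanSpace.norm_eq, ← normSq_eq_norm_sq, h]⟩

lemma S3.vec_mk (a b : ℂ) (h : normSq a + normSq b = 1) : (S3.mk a b h).vec = ![a, b] := rfl

lemma mem_sphere_iff_sq_add_sq_add_sq {p : EuclideanSpace ℝ (Fin 3)} :
    p ∈ Metric.sphere 0 1 ↔ p 0 ^ 2 + p 1 ^ 2 + p 2 ^ 2 = 1 := by
  simp [EuclideanSpace.sphere_zero_eq 1 zero_le_one, Fin.sum_univ_three]

/-- The Bloch sphere: the point `p` of the two-sphere corresponds to the rank-one orthogonal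
projection `(1 + p · σ) / 2` of `ℂ²`, where `σ` is the vector of Pauli matrices. -/
noncomputable def blochProjection (p : S2) : Matrix (Fin 2) (Fin 2) ℂ :=
  (2⁻¹ : ℂ) • !![1 + (p.1 2 : ℂ), p.1 0 - p.1 1 * I; p.1 0 + p.1 1 * I, 1 - p.1 2]

lemma continuous_blochProjection : Continuous blochProjection := by
  unfold blochProjection
  fun_prop

/-- The Hopf fibration, sending a unit vector of `ℂ²` to the line it spans, seen as a point of the
Bloch sphere. -/
noncomputable def hopf : C(S3, S2) where
  toFun v := ⟨!₂[2 * (conj (v.vec 0) * v.vec 1).re, 2 * (conj (v.vec 0) * v.vec 1).im,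
    normSq (v.vec 0) - normSq (v.vec 1)], by
      have hprod := normSq_mul (conj (v.vec 0)) (v.vec 1)
      rw [normSq_conj, normSq_apply (_ * _)] at hprod
      rw [mem_sphere_iff_sq_add_sq_add_sq]
      change (2 * _) ^ 2 + (2 * _) ^ 2 + (_ - _) ^ 2 = (1 : ℝ)
      linear_combination 4 * hprod +
        (normSq (v.vec 0) + normSq (v.vec 1) + 1) * v.normSq_add_normSq⟩
  continuous_toFun := by
    have := S3.continuous_vec
    fun_prop

lemma hopf_apply_zero (v : S3) : (hopf v).1 0 = 2 * (conj (v.vec 0) * v.vec 1).re := rfl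

lemma hopf_apply_one (v : S3) : (hopf v).1 1 = 2 * (conj (v.vec 0) * v.vec 1).im := rfl

lemma hopf_apply_two (v : S3) : (hopf v).1 2 = normSq (v.vec 0) - normSq (v.vec 1) := rfl

lemma blochProjection_hopf (v : S3) : blochProjection (hopf v) = vecMulVec v.vec (star v.vec) := by
  have h : (normSq (v.vec 0) + normSq (v.vec 1) : ℂ) = 1 := mod_cast v.normSq_add_normSq
  have h₀₀ : 1 + ((hopf v).1 2 : ℂ) = 2 * (v.vec 0 * conj (v.vec 0)) := by
    rw [hopf_apply_two, mul_conj, ofReal_sub]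
    linear_combination -h
  have h₁₁ : 1 - ((hopf v).1 2 : ℂ) = 2 * (v.vec 1 * conj (v.vec 1)) := by
    rw [hopf_apply_two, mul_conj, ofReal_sub]
    linear_combination -h
  have h₁₀ : ((hopf v).1 0 : ℂ) + (hopf v).1 1 * I = 2 * (v.vec 1 * conj (v.vec 0)) := by
    rw [hopf_apply_zero, hopf_apply_one, ofReal_mul, ofReal_mul, ofReal_ofNat]
    linear_combination 2 * re_add_im (conj (v.vec 0) * v.vec 1)
  have h₀₁ : ((hopf v).1 0 : ℂ) - (hopf v).1 1 * I = 2 * (v.vec 0 * conj (v.vec 1)) := by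
    simpa [sub_eq_add_neg, conj_ofNat, mul_comm (v.vec 0)] using congrArg conj h₁₀
  rw [blochProjection, h₀₀, h₀₁, h₁₀, h₁₁, eta_fin_two (vecMulVec _ _)]
  simp [vecMulVec_apply]

lemma hopf_surjective : Function.Surjective hopf := by
  intro p
  have hp := mem_sphere_iff_sq_add_sq_add_sq.1 p.2
  obtain ⟨hz₁, hz₂⟩ : -1 ≤ p.1 2 ∧ p.1 2 ≤ 1 := by
    rw [← abs_le, ← sq_le_one_iff_abs_le_one]
    nlinarith
  set r := √((1 + p.1 2) / 2)
  set s := √((1 - p.1 2) / 2)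
  have hr : r ^ 2 = (1 + p.1 2) / 2 := Real.sq_sqrt (by linarith)
  have hs : s ^ 2 = (1 - p.1 2) / 2 := Real.sq_sqrt (by linarith)
  let ζ : ℂ := ⟨p.1 0, p.1 1⟩
  let u := Complex.exp (arg ζ * I)
  have hu : normSq u = 1 := by rw [normSq_eq_norm_sq, norm_exp_ofReal_mul_I, one_pow]
  have hrs : 2 * (r * s) = ‖ζ‖ := by
    rw [← sq_eq_sq₀ (by positivity) (norm_nonneg ζ), ← normSq_eq_norm_sq, normSq_apply]
    linear_combination 4 * s ^ 2 * hr + 2 * (1 + p.1 2) * hs - hp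
  have hrsu : 2 * (r * (s * u)) = ζ := by
    rw [← norm_mul_exp_arg_mul_I ζ, ← hrs]
    push_cast
    ring
  refine ⟨S3.mk r (s * u) ?_, Subtype.ext ?_⟩
  · rw [normSq_mul, hu, normSq_ofReal, normSq_ofReal]
    linear_combination hr + hs
  · ext i
    fin_cases i
    · simpa [hopf_apply_zero, S3.vec_mk] using congrArg re hrsu
    · simpa [hopf_apply_one, S3.vec_mk] using congrArg im hrsu
    · change normSq (r : ℂ) - normSq (s * u) = p.1 2
      rw [normSq_mul, hu, normSq_ofReal, normSq_ofReal]
      linear_combination hr - hs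

end Spinors

section TautologicalBundle

/-- The projection onto the line of `Sym² ℂ²` spanned by the product of the spinors of `p` and `q`.
Identifying `Sym2 S²` with the complex projective plane of binary quadratic forms, this is the
tautological line bundle. -/
noncomputable def tautologicalProj :
    Sym2 S2 → Matrix (Fin 2) (Fin 2) ℂ →L[ℂ] Matrix (Fin 2) (Fin 2) ℂ :=
  Sym2.lift ⟨fun p q ↦ symProj (blochProjection p) (blochProjection q), fun _ _ ↦ symProj_comm _ _⟩

lemma tautologicalProj_mk (p q : S2) :
    tautologicalProj s(p, q) = symProj (blochProjection p) (blochProjection q) := rfl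

lemma tautologicalProj_mk_hopf (v w : S3) : tautologicalProj s(hopf v, hopf w) =
    symProj (vecMulVec v.vec (star v.vec)) (vecMulVec w.vec (star w.vec)) := by
  rw [tautologicalProj_mk, blochProjection_hopf, blochProjection_hopf]

lemma tautologicalProj_symProd (v w : S3) :
    tautologicalProj s(hopf v, hopf w) (symProd v.vec w.vec) = symProd v.vec w.vec := by
  rw [tautologicalProj_mk_hopf, symProj_symProd v.star_dotProduct_self w.star_dotProduct_self]

lemma one_add_trace_blochProjection_ne_zero (p q : S2) :
    1 + trace (blochProjection p * blochProjection q) ≠ 0 := by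
  obtain ⟨v, rfl⟩ := hopf_surjective p
  obtain ⟨w, rfl⟩ := hopf_surjective q
  rw [blochProjection_hopf, blochProjection_hopf]
  exact one_add_trace_vecMulVec_star_mul_ne_zero v.vec w.vec

lemma continuous_tautologicalProj : Continuous tautologicalProj := by
  refine continuous_quot_lift _ (continuous_symProj ?_ ?_ fun x ↦
    one_add_trace_blochProjection_ne_zero x.1 x.2)
  · exact continuous_blochProjection.comp continuous_fst
  · exact continuous_blochProjection.comp continuous_snd

lemma isIdempotentElem_tautologicalProj (x : Sym2 S2) : IsIdempotentElem (tautologicalProj x) := by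
  induction x with
  | h p q =>
    obtain ⟨v, rfl⟩ := hopf_surjective p
    obtain ⟨w, rfl⟩ := hopf_surjective q
    rw [tautologicalProj_mk_hopf]
    exact isIdempotentElem_symProj v.star_dotProduct_self w.star_dotProduct_self

/-- The maps on the three-sphere that are equivariant for the circle action by scalars. A nowhere
vanishing equivariant section of the pullback of a line bundle along the Hopf fibration amounts to
an isomorphism from the tautological line bundle of the two-sphere. -/
def equivariantMaps (V : Type*) [SMul ℂ V] : Set (S3 → V) :=
  {m | ∀ (c : ℂ) (v w : S3), w.vec = c • v.vec → m w = c • m v}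

lemma hopf_eq_of_vec_eq_smul {c : ℂ} {v w : S3} (h : w.vec = c • v.vec) : hopf w = hopf v := by
  have h₀ : w.vec 0 = c * v.vec 0 := congrFun h 0
  have h₁ : w.vec 1 = c * v.vec 1 := congrFun h 1
  have hc : normSq c = 1 := by
    have hw := w.normSq_add_normSq
    rwa [h₀, h₁, normSq_mul, normSq_mul, ← mul_add, v.normSq_add_normSq, mul_one] at hw
  have hprod : conj (w.vec 0) * w.vec 1 = conj (v.vec 0) * v.vec 1 := by
    have hcc : conj c * c = 1 := by rw [← normSq_eq_conj_mul_self, hc, ofReal_one]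
    rw [h₀, h₁, map_mul]
    linear_combination conj (v.vec 0) * v.vec 1 * hcc
  ext i
  fin_cases i
  · exact congrArg (2 * re ·) hprod
  · exact congrArg (2 * im ·) hprod
  · change normSq (w.vec 0) - normSq (w.vec 1) = normSq (v.vec 0) - normSq (v.vec 1)
    rw [h₀, h₁, normSq_mul, normSq_mul, hc, one_mul, one_mul]

lemma apply_hopf_mem_equivariantMaps {V : Type*} [NormedAddCommGroup V] [NormedSpace ℂ V]
    (Q : S2 → V →L[ℂ] V) {m : S3 → V} (hm : m ∈ equivariantMaps V) :
    (fun v ↦ Q (hopf v) (m v)) ∈ equivariantMaps V := by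
  intro c v w h
  simp only [hopf_eq_of_vec_eq_smul h, hm c v w h, map_smul]

lemma hasNonvanishingSection_tautologicalProj_mk_const (x₀ : S2) :
    HasNonvanishingSection (fun v ↦ tautologicalProj s(hopf v, x₀)) (equivariantMaps _) := by
  obtain ⟨w, rfl⟩ := hopf_surjective x₀
  refine ⟨fun v ↦ symProd v.vec w.vec, fun c v v' h ↦ ?_, ?_, fun v ↦ ⟨?_, ?_⟩⟩
  · simp only [symProd, h, smul_vecMulVec, vecMulVec_smul, smul_add]
  · have := S3.continuous_vec
    unfold symProd
    fun_prop
  · exact symProd_ne_zero v.star_dotProduct_self w.star_dotProduct_self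
  · exact tautologicalProj_symProd v w

end TautologicalBundle

section Diagonal

lemma blochProjection_ne_zero (p : S2) : blochProjection p ≠ 0 := by
  intro h
  have htrace : trace (blochProjection p) = 1 := by
    obtain ⟨v, rfl⟩ := hopf_surjective p
    rw [blochProjection_hopf, trace_vecMulVec, dotProduct_comm, v.star_dotProduct_self]
  simp [h] at htrace

lemma isIdempotentElem_blochProjection (p : S2) : IsIdempotentElem (blochProjection p) := by
  obtain ⟨v, rfl⟩ := hopf_surjective p
  rw [IsIdempotentElem, blochProjection_hopf, vecMulVec_mul_vecMulVec, v.star_dotProduct_self,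
    one_smul]

lemma exists_eq_smul_vecMulVec_self {p : S2} {M : Matrix (Fin 2) (Fin 2) ℂ}
    (hM : tautologicalProj s(p, p) M = M) {l : Fin 2 → ℂ} (hl : l ≠ 0)
    (hpl : blochProjection p *ᵥ l = l) : ∃ d : ℂ, M = d • vecMulVec l l := by
  obtain ⟨v, rfl⟩ := hopf_surjective p
  rw [tautologicalProj_mk_hopf, symProj_vecMulVec_apply, symProd] at hM
  rw [blochProjection_hopf, vecMulVec_mulVec, op_smul_eq_smul] at hpl
  generalize star v.vec ⬝ᵥ l = μ at hpl
  have hμ : μ ≠ 0 := fun h ↦ hl (by rw [← hpl, h, zero_smul])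
  rw [← two_smul ℂ, smul_smul] at hM
  obtain ⟨c, rfl⟩ : ∃ c : ℂ, M = c • vecMulVec v.vec v.vec := ⟨_, hM.symm⟩
  refine ⟨c / μ ^ 2, ?_⟩
  rw [← hpl, smul_vecMulVec, vecMulVec_smul, smul_smul, smul_smul, mul_assoc, ← sq,
    div_mul_cancel₀ _ (pow_ne_zero 2 hμ)]

lemma star_dotProduct_smul_vecMulVec_mulVec_star {n : Type*} [Fintype n] (d : ℂ) (l : n → ℂ) :
    star l ⬝ᵥ (d • vecMulVec l l) *ᵥ star l = d * (star l ⬝ᵥ l) ^ 2 := by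
  simp [smul_mulVec, vecMulVec_mulVec, dotProduct_comm l, sq]

/-- Over a contractible base, a section of the square of a line bundle is the square of a
section. -/
lemma exists_continuous_eq_vecMulVec_self {K : Type*} [TopologicalSpace K] [CompactSpace K]
    [ContractibleSpace K] [LocallyPathConnectedSpace K] (g : C(K, S2))
    {m : K → Matrix (Fin 2) (Fin 2) ℂ} (hm : Continuous m) (hm₀ : ∀ w, m w ≠ 0)
    (hmg : ∀ w, tautologicalProj s(g w, g w) (m w) = m w) :
    ∃ l : K → Fin 2 → ℂ, Continuous l ∧ ∀ w, m w = vecMulVec (l w) (l w) := by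
  have hcont : Continuous fun w ↦ toEuclideanCLM (𝕜 := ℂ) (blochProjection (g w)) :=
    (toEuclideanCLM (n := Fin 2)
      (𝕜 := ℂ)).toAlgEquiv.toLinearMap.continuous_of_finiteDimensional.comp
      (continuous_blochProjection.comp g.continuous)
  obtain ⟨v, -, hv, hvP⟩ := hasNonvanishingSection_of_contractibleSpace hcont
    (fun w ↦ (isIdempotentElem_blochProjection (g w)).map toEuclideanCLM)
    (fun w ↦ EmbeddingLike.map_ne_zero_iff.2 (blochProjection_ne_zero (g w)))
  let l (w : K) : Fin 2 → ℂ := (v w).ofLp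
  have hl : Continuous l := by fun_prop
  have hl₀ w : l w ≠ 0 := by simpa [l] using (hvP w).1
  have hlP w : blochProjection (g w) *ᵥ l w = l w := by
    simpa [l] using congrArg WithLp.ofLp (hvP w).2
  have hd w := exists_eq_smul_vecMulVec_self (hmg w) (hl₀ w) (hlP w)
  choose d hd using hd
  have hl_norm w : star (l w) ⬝ᵥ l w ≠ 0 := mt dotProduct_star_self_eq_zero.1 (hl₀ w)
  have hd_eq w : d w = (star (l w) ⬝ᵥ m w *ᵥ star (l w)) / (star (l w) ⬝ᵥ l w) ^ 2 := by
    rw [eq_div_iff (pow_ne_zero 2 (hl_norm w)), hd, star_dotProduct_smul_vecMulVec_mulVec_star]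
  have hd_cont : Continuous d := by
    rw [funext hd_eq]
    fun_prop (disch := intro w; exact pow_ne_zero 2 (hl_norm w))
  have hd₀ w : d w ≠ 0 := fun h ↦ hm₀ w (by rw [hd, h, zero_smul])
  obtain ⟨r, hr⟩ := exists_continuousMap_pow_eq ⟨d, hd_cont⟩ hd₀ two_ne_zero
  refine ⟨fun w ↦ r w • l w, by fun_prop, fun w ↦ ?_⟩
  rw [smul_vecMulVec, vecMulVec_smul, smul_smul, ← sq, hr]
  exact hd w

/-- The hemisphere of the three-sphere with real nonnegative second coordinate, parametrized by a
disc. The Hopf fibration collapses its boundary circle and is injective on its interior. -/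
noncomputable def discToS3 (w : Metric.closedBall (0 : ℂ) 1) : S3 :=
  S3.mk w √(1 - normSq w) <| by
    have hw : normSq w ≤ 1 := by
      rw [normSq_eq_norm_sq]
      exact pow_le_one₀ (norm_nonneg _) (mem_closedBall_zero_iff.1 w.2)
    rw [normSq_ofReal, Real.mul_self_sqrt (sub_nonneg.2 hw), add_sub_cancel]

lemma continuous_discToS3 : Continuous discToS3 := by
  unfold discToS3 S3.mk
  fun_prop

lemma vec_discToS3_circle (z : Circle) (hz : (z : ℂ) ∈ Metric.closedBall 0 1) :
    (discToS3 ⟨z, hz⟩).vec = (z : ℂ) • ![1, 0] := by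
  simp [discToS3, S3.vec_mk]

lemma not_hasNonvanishingSection_tautologicalProj_diag (g : C(S3, S2)) :
    ¬ HasNonvanishingSection (fun v ↦ tautologicalProj s(g v, g v)) (equivariantMaps _) := by
  rintro ⟨m, hequiv, hm, hmg⟩
  have : ContractibleSpace (Metric.closedBall (0 : ℂ) 1) :=
    Metric.contractibleSpace_closedBall zero_le_one
  have : LocallyPathConnectedSpace (Metric.closedBall (0 : ℂ) 1) :=
    (convex_closedBall 0 1).locallyPathConnectedSpace
  obtain ⟨l, hl, hml⟩ := exists_continuous_eq_vecMulVec_self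
    (g.comp ⟨discToS3, continuous_discToS3⟩) (hm.comp continuous_discToS3)
    (fun w ↦ (hmg (discToS3 w)).1) (fun w ↦ (hmg (discToS3 w)).2)
  let ι (z : Circle) : Metric.closedBall (0 : ℂ) 1 := ⟨z, by simp [z.norm_coe]⟩
  have hι : Continuous ι := by fun_prop
  have hvec (z : Circle) : (discToS3 (ι z)).vec = (z : ℂ) • ![1, 0] := vec_discToS3_circle z _
  have hmul (z : Circle) :
      vecMulVec (l (ι z)) (l (ι z)) = (z : ℂ) • vecMulVec (l (ι 1)) (l (ι 1)) := by
    rw [← hml, ← hml]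
    exact hequiv z _ _ (by rw [hvec, hvec, Circle.coe_one, one_smul])
  obtain ⟨i, hi⟩ : ∃ i, l (ι 1) i ≠ 0 := by
    by_contra! h
    have hl₁ : l (ι 1) = 0 := funext h
    exact (hmg _).1 ((hml (ι 1)).trans (by rw [hl₁, zero_vecMulVec]))
  refine not_exists_continuous_sqrt_circle ⟨fun z ↦ l (ι z) i / l (ι 1) i, by fun_prop, fun z ↦ ?_⟩
  rw [div_pow, div_eq_iff (pow_ne_zero 2 hi), sq, sq]
  exact congrFun₂ (hmul z) i i

end Diagonal

/-- If `Ψ : S² → S²` is a continuous map without fixed points and `φ₁, φ₂ : S² → S²` are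
continuous maps with `x ↦ ⟦(φ₁ x, φ₂ x)⟧` homotopic to `Φ₀ : x ↦ ⟦(x, x₀)⟧`, then
`φ₂(x) = Ψ(φ₁(x))` for some `x`. -/
theorem stmt_11 (x₀ : S2) (Φ₀ : C(S2, Sym2 S2)) (hΦ₀ : ∀ x, Φ₀ x = s(x, x₀))
    (Ψ : C(S2, S2)) (hΨ : ∀ p, Ψ p ≠ p)
    (φ₁ φ₂ : C(S2, S2)) (Φ : C(S2, Sym2 S2)) (hΦ : ∀ x, Φ x = s(φ₁ x, φ₂ x))
    (hhom : Φ.Homotopic Φ₀) : ∃ x : S2, φ₂ x = Ψ (φ₁ x) := by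
  by_contra! h
  have hφ : φ₂.Homotopic φ₁ :=
    homotopic_of_forall_ne (k := Ψ.comp φ₁) h fun x ↦ (hΨ (φ₁ x)).symm
  let mk : C(S2 × S2, Sym2 S2) := ⟨fun p ↦ s(p.1, p.2), continuous_quot_mk⟩
  have hΦ_eq : Φ = mk.comp (φ₁.prodMk φ₂) := ContinuousMap.ext hΦ
  have hdiag : Φ₀.Homotopic (mk.comp (φ₁.prodMk φ₁)) :=
    hhom.symm.trans (hΦ_eq ▸ .comp (.refl mk) (.prodMk (.refl φ₁) hφ))
  have hΦ₀_section : HasNonvanishingSection (fun v ↦ tautologicalProj (Φ₀ (hopf v)))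
      (equivariantMaps _) := by
    simpa only [hΦ₀] using hasNonvanishingSection_tautologicalProj_mk_const x₀
  exact not_hasNonvanishingSection_tautologicalProj_diag (φ₁.comp hopf)
    (hΦ₀_section.of_homotopic continuous_tautologicalProj isIdempotentElem_tautologicalProj hopf
      (fun Q _ ↦ apply_hopf_mem_equivariantMaps Q) hdiag)
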